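/- An isolated vertex of a simple polygon P cannot be the image of any node of a straight-line planarly polygon-embedded cycle graph in P. -/

import Mathlib

open Set Function

/-- Points in the plane. -/
abbrev Pt : Type := ℝ × ℝ

/-- The closed straight-line segment between two points. -/
def seg (a b : Pt) : Set Pt := segment ℝ a b

/-- Two vertex indices of an `n`-gon are adjacent (consecutive in the cyclic order). -/
def adjV {n : ℕ} [NeZero n] (i j : Fin n) : Prop := j = i + 1 ∨ i = j + 1

/-- The `i`-th boundary edge of the polygon with vertices `p`. -/
def edgeSeg {n : ℕ} [NeZero n] (p : Fin n → Pt) (i : Fin n) : Set Pt := seg (p i) (p (i + 1))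

/-- Two segments are non-crossing: they meet at most in shared endpoints. -/
def NC (a b c d : Pt) : Prop := seg a b ∩ seg c d ⊆ ({a, b} ∩ {c, d} : Set Pt)

/-- A simple polygon: at least 3 distinct vertices, and boundary edges meet only at
shared endpoints. -/
def IsSimplePolygon {n : ℕ} [NeZero n] (p : Fin n → Pt) : Prop :=
  3 ≤ n ∧ Function.Injective p ∧
    ∀ i j : Fin n, i ≠ j →
      edgeSeg p i ∩ edgeSeg p j ⊆ ({p i, p (i + 1)} ∩ {p j, p (j + 1)} : Set Pt)

/-- A convex polygon: a simple polygon whose vertices are in convex position. -/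
def IsConvexPolygon {n : ℕ} [NeZero n] (p : Fin n → Pt) : Prop :=
  IsSimplePolygon p ∧ ConvexIndependent ℝ p

/-- `K` is the closed region bounded by the polygon `p`. -/
def IsRegionOf {n : ℕ} [NeZero n] (p : Fin n → Pt) (K : Set Pt) : Prop :=
  IsCompact K ∧ closure (interior K) = K ∧ frontier K = ⋃ i, edgeSeg p i

/-- Vertex `a` and vertex `b` are visible from each other: the segment joining them does not
cross the polygon boundary (it meets each boundary edge only in shared endpoints). -/
def Visible {n : ℕ} [NeZero n] (p : Fin n → Pt) (a b : Fin n) : Prop :=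
  ∀ i : Fin n, seg (p a) (p b) ∩ edgeSeg p i ⊆ ({p a, p b} ∩ {p i, p (i + 1)} : Set Pt)

/-- Cross product of `b - a` and `c - a`. -/
def cross2 (a b c : Pt) : ℝ := (b.1 - a.1) * (c.2 - a.2) - (b.2 - a.2) * (c.1 - a.1)

/-- The vertices are listed counterclockwise (positive signed area). -/
def IsCCW {n : ℕ} [NeZero n] (p : Fin n → Pt) : Prop :=
  0 < ∑ i : Fin n, ((p i).1 * (p (i + 1)).2 - (p (i + 1)).1 * (p i).2)

/-- Vertex `i` of a counterclockwise polygon is reflex (interior angle greater than `π`). -/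
def IsReflex {n : ℕ} [NeZero n] (p : Fin n → Pt) (i : Fin n) : Prop :=
  cross2 (p (i - 1)) (p i) (p (i + 1)) < 0

/-- A pseudo-convex polygon: a simple (counterclockwise) polygon with no two consecutive
reflex vertices. -/
def IsPseudoConvex {n : ℕ} [NeZero n] (p : Fin n → Pt) : Prop :=
  IsSimplePolygon p ∧ IsCCW p ∧ ∀ i : Fin n, ¬ (IsReflex p i ∧ IsReflex p (i + 1))

/-- The set of vertices visible from `i`, together with `i` and its two boundary neighbours. -/
def visSet {n : ℕ} [NeZero n] (p : Fin n → Pt) (i : Fin n) : Set (Fin n) :=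
  {j | Visible p i j ∨ j = i - 1 ∨ j = i ∨ j = i + 1}

/-- Vertex `i` is isolated: it sees fewer than five vertices (counting itself and its two
neighbours), or exactly five and the two visible non-neighbours are adjacent to each other. -/
def IsIsolated {n : ℕ} [NeZero n] (p : Fin n → Pt) (i : Fin n) : Prop :=
  (visSet p i).ncard < 5 ∨
  ((visSet p i).ncard = 5 ∧
    ∀ u ∈ visSet p i, ∀ w ∈ visSet p i,
      u ∉ ({i - 1, i, i + 1} : Set (Fin n)) → w ∉ ({i - 1, i, i + 1} : Set (Fin n)) →
      u ≠ w → adjV u w)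

/-- A straight-line planar polygon embedding of the cycle graph on `m` nodes into the polygon
`p` with bounded region `K`: nodes map injectively to polygon vertices, every cycle edge is a
diagonal of the polygon (endpoints non-adjacent, hence not a polygon edge) lying inside `K`,
distinct cycle edges meet at most in shared endpoints, and cycle edges meet boundary edges at
most in shared endpoints. -/
def IsCycleEmbedding {n m : ℕ} [NeZero n] [NeZero m] (p : Fin n → Pt) (K : Set Pt)
    (f : Fin m → Fin n) : Prop :=
  Function.Injective f ∧
  (∀ k : Fin m, ¬ adjV (f k) (f (k + 1))) ∧
  (∀ k : Fin m, seg (p (f k)) (p (f (k + 1))) ⊆ K) ∧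
  (∀ k l : Fin m, ({p (f k), p (f (k + 1))} : Set Pt) ≠ ({p (f l), p (f (l + 1))} : Set Pt) →
    NC (p (f k)) (p (f (k + 1))) (p (f l)) (p (f (l + 1)))) ∧
  (∀ k : Fin m, ∀ i : Fin n,
    seg (p (f k)) (p (f (k + 1))) ∩ edgeSeg p i ⊆
      ({p (f k), p (f (k + 1))} ∩ {p i, p (i + 1)} : Set Pt))

set_option linter.unusedSimpArgs false

/-- height of the line through `s`,`t` at abscissa `x` -/
noncomputable def yv (s t : Pt) (x : ℝ) : ℝ := s.2 + (t.2 - s.2) * ((x - s.1) / (t.1 - s.1))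

/-- abscissa `x` is strictly spanned by `s`,`t` -/
def spans (s t : Pt) (x : ℝ) : Prop := (s.1 < x ∧ x < t.1) ∨ (t.1 < x ∧ x < s.1)

open Classical in
/-- mod 2 indicator that the upward ray from `q` meets the segment -/
noncomputable def rr (s t q : Pt) : ZMod 2 := if spans s t q.1 ∧ q.2 < yv s t q.1 then 1 else 0

open Classical in
/-- mod 2 indicator of the order of abscissae -/
noncomputable def LL (s u : Pt) : ZMod 2 := if s.1 < u.1 then 1 else 0

lemma LL_swap {s u : Pt} (h : s.1 ≠ u.1) : LL s u + LL u s = 1 := by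
  unfold LL
  rcases lt_or_gt_of_ne h with h | h
  · simp [h, h.le.not_gt]
  · simp [h, h.le.not_gt]

lemma yv_comm {s t : Pt} (h : s.1 ≠ t.1) (x : ℝ) : yv s t x = yv t s x := by
  unfold yv
  have h1 : s.1 - t.1 ≠ 0 := sub_ne_zero.2 h
  have h2 : t.1 - s.1 ≠ 0 := sub_ne_zero.2 h.symm
  field_simp
  ring

lemma rr_comm {s t : Pt} (h : s.1 ≠ t.1) (q : Pt) : rr s t q = rr t s q := by
  unfold rr spans
  rw [yv_comm h, or_comm]

lemma seg_comm (s t : Pt) : seg s t = seg t s := segment_symm ℝ s t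

lemma yv_mem {s t : Pt} (hlt : s.1 < t.1) {x : ℝ} (h1 : s.1 ≤ x) (h2 : x ≤ t.1) :
    (x, yv s t x) ∈ seg s t := by
  have h3 : 0 < t.1 - s.1 := by linarith
  unfold seg
  rw [segment_eq_image']
  refine ⟨(x - s.1) / (t.1 - s.1), ⟨by apply div_nonneg <;> linarith, ?_⟩, ?_⟩
  · rw [div_le_one h3]; linarith
  · ext
    · simp; field_simp; ring
    · simp [yv]; ring

lemma mem_seg_iff {s t : Pt} (hlt : s.1 < t.1) {z : Pt} (hz : z ∈ seg s t) :
    s.1 ≤ z.1 ∧ z.1 ≤ t.1 ∧ z.2 = yv s t z.1 := by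
  have h3 : 0 < t.1 - s.1 := by linarith
  unfold seg at hz
  rw [segment_eq_image'] at hz
  obtain ⟨θ, ⟨h0, h1⟩, rfl⟩ := hz
  refine ⟨?_, ?_, ?_⟩
  · simp; positivity
  · simp; nlinarith
  · simp [yv]; field_simp

lemma yv_left (s t : Pt) : yv s t s.1 = s.2 := by simp [yv]

lemma yv_right {s t : Pt} (h : s.1 ≠ t.1) : yv s t t.1 = t.2 := by
  rw [yv_comm h, yv_left]

lemma yv_cont (s t : Pt) : Continuous (yv s t) := by
  unfold yv; fun_prop

/-- no sign change of height difference on overlap for disjoint segments -/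
lemma yv_sign {s t u v : Pt} (h1 : s.1 < t.1) (h2 : u.1 < v.1) (hd : Disjoint (seg s t) (seg u v))
    {x y : ℝ} (hxy : x ≤ y) (a1 : s.1 ≤ x) (a2 : y ≤ t.1) (b1 : u.1 ≤ x) (b2 : y ≤ v.1) :
    (yv s t x < yv u v x ∧ yv s t y < yv u v y) ∨ (yv u v x < yv s t x ∧ yv u v y < yv s t y) := by
  have key : ∀ z ∈ Icc x y, yv s t z ≠ yv u v z := by
    intro z hz he
    refine Set.disjoint_left.1 hd (yv_mem h1 (a1.trans hz.1) (hz.2.trans a2)) ?_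
    rw [he]
    exact yv_mem h2 (b1.trans hz.1) (hz.2.trans b2)
  have hc : ContinuousOn (fun z => yv s t z - yv u v z) (Icc x y) :=
    ((yv_cont s t).sub (yv_cont u v)).continuousOn
  have kx := key x ⟨le_rfl, hxy⟩
  have ky := key y ⟨hxy, le_rfl⟩
  rcases lt_or_gt_of_ne kx with k1 | k1 <;> rcases lt_or_gt_of_ne ky with k2 | k2
  · exact Or.inl ⟨k1, k2⟩
  · obtain ⟨z, hz, h⟩ := intermediate_value_Icc hxy hc (show (0:ℝ) ∈ Icc _ _ from ⟨by simp; linarith, by simp; linarith⟩)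
    exact absurd (sub_eq_zero.1 h) (key z hz)
  · obtain ⟨z, hz, h⟩ := intermediate_value_Icc' hxy hc (show (0:ℝ) ∈ Icc _ _ from ⟨by simp; linarith, by simp; linarith⟩)
    exact absurd (sub_eq_zero.1 h) (key z hz)
  · exact Or.inr ⟨k1, k2⟩

lemma pair_aux {s t u v : Pt} (h1 : s.1 < t.1) (h2 : u.1 < v.1) (h3 : s.1 < u.1)
    (htu : t.1 ≠ u.1) (htv : t.1 ≠ v.1)
    (hd : Disjoint (seg s t) (seg u v)) :
    rr s t u + rr s t v + rr u v s + rr u v t = LL s u + LL t u + LL s v + LL t v := by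
  have e2 : (1:ZMod 2) + 1 = 0 := by decide
  have nst : ¬ t.1 < s.1 := h1.le.not_gt
  have nuv : ¬ v.1 < u.1 := h2.le.not_gt
  have nsu : ¬ u.1 < s.1 := h3.le.not_gt
  have hsv : s.1 < v.1 := h3.trans h2
  rcases lt_or_gt_of_ne htu with h4 | h4
  · have h5 : t.1 < v.1 := h4.trans h2
    simp [rr, LL, spans, h1, h2, h3, h4, h5, nst, nuv, nsu, hsv, h4.le.not_gt, h5.le.not_gt, hsv.le.not_gt, e2]
  · rcases lt_or_gt_of_ne htv with h5 | h5
    · have := yv_sign h1 h2 hd h4.le h3.le le_rfl le_rfl h5.le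
      rw [yv_left, yv_right h1.ne] at this
      rcases this with ⟨k1, k2⟩ | ⟨k1, k2⟩ <;>
      simp [rr, LL, spans, h1, h2, h3, h4, h5, nst, nuv, nsu, hsv, h4.le.not_gt, h5.le.not_gt, hsv.le.not_gt, e2, k1, k2, k1.le.not_gt, k2.le.not_gt]
    · have := yv_sign h1 h2 hd h2.le h3.le h5.le le_rfl le_rfl
      rw [yv_left, yv_right h2.ne] at this
      rcases this with ⟨k1, k2⟩ | ⟨k1, k2⟩ <;>
      simp [rr, LL, spans, h1, h2, h3, h4, h5, nst, nuv, nsu, hsv, h4.le.not_gt, h5.le.not_gt, hsv.le.not_gt, e2, k1, k2, k1.le.not_gt, k2.le.not_gt]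

lemma pair_aux2 {s t u v : Pt} (h1 : s.1 < t.1) (h2 : u.1 < v.1) (hsu : s.1 ≠ u.1)
    (hsv : s.1 ≠ v.1) (htu : t.1 ≠ u.1) (htv : t.1 ≠ v.1)
    (hd : Disjoint (seg s t) (seg u v)) :
    rr s t u + rr s t v + rr u v s + rr u v t = LL s u + LL t u + LL s v + LL t v := by
  rcases lt_or_gt_of_ne hsu with h | h
  · exact pair_aux h1 h2 h htu htv hd
  · have := pair_aux h2 h1 h hsv.symm htv.symm hd.symm
    have a1 := LL_swap hsu
    have a2 := LL_swap hsv
    have a3 := LL_swap htu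
    have a4 := LL_swap htv
    have e2 : (2:ZMod 2) = 0 := by decide
    linear_combination this - a1 - a2 - a3 - a4 + (LL u s + LL v s + LL u t + LL v t - 2) * e2

lemma pair_formula {s t u v : Pt} (hst : s.1 ≠ t.1) (huv : u.1 ≠ v.1) (hsu : s.1 ≠ u.1)
    (hsv : s.1 ≠ v.1) (htu : t.1 ≠ u.1) (htv : t.1 ≠ v.1)
    (hd : Disjoint (seg s t) (seg u v)) :
    rr s t u + rr s t v + rr u v s + rr u v t = LL s u + LL t u + LL s v + LL t v := by
  rcases lt_or_gt_of_ne hst with h1 | h1 <;> rcases lt_or_gt_of_ne huv with h2 | h2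
  · exact pair_aux2 h1 h2 hsu hsv htu htv hd
  · have := pair_aux2 h1 h2 hsv hsu htv htu (by rwa [seg_comm v u])
    rw [rr_comm huv, rr_comm huv]; linear_combination this
  · have := pair_aux2 h1 h2 htu htv hsu hsv (by rwa [seg_comm t s])
    rw [rr_comm hst, rr_comm hst]; linear_combination this
  · have := pair_aux2 h1 h2 htv htu hsv hsu (by rwa [seg_comm t s, seg_comm v u])
    rw [rr_comm hst, rr_comm hst, rr_comm huv, rr_comm huv]; linear_combination this

/-- path versus segment -/
lemma path_seg (P : ℕ → Pt) (a b : ℕ) (hab : a ≤ b) (u v : Pt) (huv : u.1 ≠ v.1)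
    (hP : ∀ k, a ≤ k → k < b → (P k).1 ≠ (P (k+1)).1)
    (hu : ∀ k, a ≤ k → k ≤ b → (P k).1 ≠ u.1)
    (hv : ∀ k, a ≤ k → k ≤ b → (P k).1 ≠ v.1)
    (hd : ∀ k, a ≤ k → k < b → Disjoint (seg (P k) (P (k+1))) (seg u v)) :
    (∑ k ∈ Finset.Ico a b, rr (P k) (P (k+1)) u) + (∑ k ∈ Finset.Ico a b, rr (P k) (P (k+1)) v)
      + rr u v (P a) + rr u v (P b) = LL (P a) u + LL (P b) u + LL (P a) v + LL (P b) v := by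
  have e2 : (2:ZMod 2) = 0 := by decide
  induction b, hab using Nat.le_induction with
  | base => simp; linear_combination (rr u v (P a) - LL (P a) u - LL (P a) v) * e2
  | succ b hb ih =>
    have i1 := ih (fun k h1 h2 => hP k h1 (by omega)) (fun k h1 h2 => hu k h1 (by omega))
      (fun k h1 h2 => hv k h1 (by omega)) (fun k h1 h2 => hd k h1 (by omega))
    have i2 := pair_formula (hP b hb (by omega)) huv (hu b hb (by omega)) (hv b hb (by omega))
      (hu (b+1) (by omega) le_rfl) (hv (b+1) (by omega) le_rfl) (hd b hb (by omega))
    rw [Finset.sum_Ico_succ_top hb, Finset.sum_Ico_succ_top hb]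
    linear_combination i1 + i2 + (- rr u v (P b) + LL (P b) u + LL (P b) v) * e2

/-- path versus path -/
lemma path_path (P : ℕ → Pt) (a b c d : ℕ) (hab : a ≤ b) (hcd : c ≤ d)
    (hP : ∀ k, a ≤ k → k < b → (P k).1 ≠ (P (k+1)).1)
    (hQ : ∀ k, c ≤ k → k < d → (P k).1 ≠ (P (k+1)).1)
    (hx : ∀ k l, a ≤ k → k ≤ b → c ≤ l → l ≤ d → (P k).1 ≠ (P l).1)
    (hd : ∀ k l, a ≤ k → k < b → c ≤ l → l < d →
      Disjoint (seg (P k) (P (k+1))) (seg (P l) (P (l+1)))) :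
    (∑ k ∈ Finset.Ico a b, rr (P k) (P (k+1)) (P c))
      + (∑ k ∈ Finset.Ico a b, rr (P k) (P (k+1)) (P d))
      + (∑ k ∈ Finset.Ico c d, rr (P k) (P (k+1)) (P a))
      + (∑ k ∈ Finset.Ico c d, rr (P k) (P (k+1)) (P b))
      = LL (P a) (P c) + LL (P b) (P c) + LL (P a) (P d) + LL (P b) (P d) := by
  have e2 : (2:ZMod 2) = 0 := by decide
  induction d, hcd using Nat.le_induction with
  | base =>
    simp
    linear_combination ((∑ k ∈ Finset.Ico a b, rr (P k) (P (k+1)) (P c)) - LL (P a) (P c) - LL (P b) (P c)) * e2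
  | succ d hc ih =>
    have i1 := ih (fun k h1 h2 => hQ k h1 (by omega)) (fun k l h1 h2 h3 h4 => hx k l h1 h2 h3 (by omega))
      (fun k l h1 h2 h3 h4 => hd k l h1 h2 h3 (by omega))
    have i2 := path_seg P a b hab (P d) (P (d+1)) (hQ d hc (by omega)) hP
      (fun k h1 h2 => hx k d h1 h2 hc (by omega)) (fun k h1 h2 => hx k (d+1) h1 h2 (by omega) le_rfl)
      (fun k h1 h2 => hd k d h1 h2 hc (by omega))
    rw [Finset.sum_Ico_succ_top hc, Finset.sum_Ico_succ_top hc]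
    linear_combination i1 + i2 + (-(∑ k ∈ Finset.Ico a b, rr (P k) (P (k+1)) (P d)) + LL (P a) (P d) + LL (P b) (P d)) * e2

open Classical in
/-- one-dimensional parity principle -/
lemma parity_line (E : Finset ℕ) (Y : ℕ → ℝ) (hY : ∀ k ∈ E, ∀ l ∈ E, Y k = Y l → k = l)
    (h : ℝ → Prop)
    (hconst : ∀ y₁ y₂, y₁ ≤ y₂ → (∀ k ∈ E, ¬ (y₁ ≤ Y k ∧ Y k ≤ y₂)) → (h y₁ ↔ h y₂))
    (hflip : ∀ k ∈ E, ∀ᶠ δ in nhdsWithin (0:ℝ) (Ioi 0), (h (Y k - δ) ↔ ¬ h (Y k + δ)))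
    (hbig : ∃ M, ∀ y ≥ M, ¬ h y) :
    ∀ (N : ℕ) (y : ℝ), (∀ k ∈ E, Y k ≠ y) → (E.filter (fun k => y < Y k)).card = N →
      (h y ↔ Odd N) := by
  intro N
  induction N with
  | zero =>
    intro y hy hc
    rw [Finset.card_eq_zero, Finset.filter_eq_empty_iff] at hc
    obtain ⟨M, hM⟩ := hbig
    rw [hconst y (max y M) (le_max_left _ _)]
    · simpa using hM _ (le_max_right y M)
    · intro k hk hh
      exact hc hk (lt_of_le_of_ne hh.1 (hy k hk).symm)
  | succ N ih =>
    intro y hy hc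
    have hne : (E.filter (fun k => y < Y k)).Nonempty := by
      rw [← Finset.card_pos]; omega
    obtain ⟨k0, hk0, hmin⟩ := Finset.exists_min_image _ Y hne
    rw [Finset.mem_filter] at hk0
    have e1 : ∀ᶠ δ in nhdsWithin (0:ℝ) (Ioi 0), δ < Y k0 - y := by
      apply Filter.Eventually.filter_mono nhdsWithin_le_nhds
      exact eventually_lt_nhds (by linarith [hk0.2])
    have e2 : ∀ᶠ δ in nhdsWithin (0:ℝ) (Ioi 0), ∀ k ∈ E, Y k0 < Y k → Y k0 + δ < Y k := by
      apply Filter.Eventually.filter_mono nhdsWithin_le_nhds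
      rw [Filter.eventually_all_finset]
      intro k hk
      by_cases hh : Y k0 < Y k
      · filter_upwards [eventually_lt_nhds (show (0:ℝ) < Y k - Y k0 by linarith)] with δ hδ _
        linarith
      · exact Filter.Eventually.of_forall fun _ h => absurd h hh
    have e3 : ∀ᶠ δ in nhdsWithin (0:ℝ) (Ioi 0), 0 < δ := self_mem_nhdsWithin
    obtain ⟨δ, d1, d2, d3, d4⟩ := (e1.and (e2.and (e3.and (hflip k0 hk0.1)))).exists
    have key : ∀ k ∈ E, Y k0 ≤ Y k ∨ Y k < y := by
      intro k hk
      by_cases hh : y < Y k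
      · exact Or.inl (hmin k (by simp [hk, hh]))
      · exact Or.inr (lt_of_le_of_ne (not_lt.1 hh) (hy k hk))
    have c1 : h y ↔ h (Y k0 - δ) := by
      apply hconst _ _ (by linarith)
      rintro k hk ⟨h1, h2⟩
      rcases key k hk with h3 | h3 <;> linarith
    have hy' : ∀ k ∈ E, Y k ≠ Y k0 + δ := by
      intro k hk he
      have := d2 k hk (by linarith)
      linarith
    have hc' : (E.filter (fun k => Y k0 + δ < Y k)).card = N := by
      have : E.filter (fun k => Y k0 + δ < Y k) = (E.filter (fun k => y < Y k)).erase k0 := by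
        ext k
        simp only [Finset.mem_filter, Finset.mem_erase]
        constructor
        · rintro ⟨hk, h1⟩
          refine ⟨?_, hk, by linarith⟩
          rintro rfl
          linarith
        · rintro ⟨h1, hk, h2⟩
          refine ⟨hk, d2 k hk ?_⟩
          have := hmin k (by simp [hk, h2])
          exact lt_of_le_of_ne this fun he => h1 (hY k hk k0 hk0.1 he.symm)
      rw [this, Finset.card_erase_of_mem (by simp [hk0]), hc]; rfl
    rw [c1, d4, ih _ hy' hc', Nat.odd_add_one]

lemma side_of_conn {K s : Set Pt} (hs : IsPreconnected s) (hd : Disjoint s (frontier K)) :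
    s ⊆ interior K ∨ s ⊆ (closure K)ᶜ := by
  by_contra hcon
  push Not at hcon
  obtain ⟨h1, h2⟩ := hcon
  obtain ⟨x, hx, hx'⟩ := Set.not_subset.1 h1
  obtain ⟨y, hy, hy'⟩ := Set.not_subset.1 h2
  have cov : s ⊆ interior K ∪ (closure K)ᶜ := by
    intro z hz
    by_cases hh : z ∈ interior K
    · exact Or.inl hh
    · refine Or.inr fun hc => Set.disjoint_left.1 hd hz ⟨hc, hh⟩
  have hx2 : x ∈ (closure K)ᶜ := (cov hx).resolve_left hx'
  have hy2 : y ∈ interior K := (cov hy).resolve_right hy'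
  obtain ⟨z, _, hz1, hz2⟩ := hs _ _ isOpen_interior isClosed_closure.isOpen_compl cov ⟨y, hy, hy2⟩ ⟨x, hx, hx2⟩
  exact hz2 (subset_closure (interior_subset hz1))

/-- crossing an edge transversally swaps inside and outside -/
lemma flip_edge {K : Set Pt} (hKc : IsClosed K) (hcl : closure (interior K) = K)
    (s t : Pt) (hlt : s.1 < t.1) (C : Set Pt) (hC : IsClosed C)
    (hfr : frontier K = seg s t ∪ C) (x : ℝ) (h1 : s.1 < x) (h2 : x < t.1)
    (hxC : (x, yv s t x) ∉ C) :
    ∀ᶠ δ in nhdsWithin (0:ℝ) (Ioi 0), ((x, yv s t x - δ) ∈ K ↔ ¬ (x, yv s t x + δ) ∈ K) := by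
  set z : Pt := (x, yv s t x) with hz
  have hU : IsOpen ({w : Pt | s.1 < w.1} ∩ {w : Pt | w.1 < t.1} ∩ Cᶜ) := by
    refine ((isOpen_lt ?_ ?_).inter (isOpen_lt ?_ ?_)).inter hC.isOpen_compl <;> fun_prop
  obtain ⟨ε, hε, hball⟩ := Metric.isOpen_iff.1 hU z ⟨⟨h1, h2⟩, hxC⟩
  have aff : ∃ m c : ℝ, ∀ w, yv s t w = m * w + c :=
    ⟨(t.2 - s.2) / (t.1 - s.1), s.2 - (t.2 - s.2) / (t.1 - s.1) * s.1, fun w => by unfold yv; ring⟩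
  obtain ⟨m, c, hmc⟩ := aff
  have conv1 : Convex ℝ (Metric.ball z ε ∩ {w : Pt | yv s t w.1 < w.2}) := by
    apply (convex_ball z ε).inter
    intro a ha b hb α β hα hβ hαβ
    simp only [mem_ofPred_eq, hmc] at *
    simp
    have hβ' : β = 1 - α := by linarith
    subst hβ'
    rcases hα.eq_or_lt with h | h
    · subst h; simpa using hb
    · nlinarith [mul_le_mul_of_nonneg_left hb.le hβ, mul_lt_mul_of_pos_left ha h]
  have conv2 : Convex ℝ (Metric.ball z ε ∩ {w : Pt | w.2 < yv s t w.1}) := by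
    apply (convex_ball z ε).inter
    intro a ha b hb α β hα hβ hαβ
    simp only [mem_ofPred_eq, hmc] at *
    simp
    have hβ' : β = 1 - α := by linarith
    subst hβ'
    rcases hα.eq_or_lt with h | h
    · subst h; simpa using hb
    · nlinarith [mul_le_mul_of_nonneg_left hb.le hβ, mul_lt_mul_of_pos_left ha h]
  have fr : ∀ w ∈ Metric.ball z ε, w ∈ frontier K → w.2 = yv s t w.1 := by
    intro w hw hf
    rw [hfr] at hf
    rcases hf with hf | hf
    · exact (mem_seg_iff hlt hf).2.2
    · exact absurd hf (hball hw).2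
  have onfr : ∀ w ∈ Metric.ball z ε, w.2 = yv s t w.1 → w ∈ frontier K := by
    intro w hw he
    rw [hfr]
    left
    have := yv_mem hlt (hball hw).1.1.le (hball hw).1.2.le
    rwa [← he] at this
  have S1 := side_of_conn (K := K) conv1.isPreconnected (Set.disjoint_left.2 fun w hw hf => by
    have := fr w hw.1 hf
    have h3 := hw.2
    simp at h3; linarith)
  have S2 := side_of_conn (K := K) conv2.isPreconnected (Set.disjoint_left.2 fun w hw hf => by
    have := fr w hw.1 hf
    have h3 := hw.2
    simp at h3; linarith)
  rw [hKc.closure_eq] at S1 S2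
  have hzf : z ∈ frontier K := onfr z (Metric.mem_ball_self hε) rfl
  have e3 : ∀ᶠ δ in nhdsWithin (0:ℝ) (Ioi 0), 0 < δ := self_mem_nhdsWithin
  have e4 : ∀ᶠ δ in nhdsWithin (0:ℝ) (Ioi 0), δ < ε :=
    Filter.Eventually.filter_mono nhdsWithin_le_nhds (eventually_lt_nhds hε)
  filter_upwards [e3, e4] with δ d1 d2
  have m1 : ((x, yv s t x + δ) : Pt) ∈ Metric.ball z ε ∩ {w : Pt | yv s t w.1 < w.2} := by
    refine ⟨?_, by simpa using d1⟩
    rw [Metric.mem_ball, hz, Prod.dist_eq]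
    simp [Real.dist_eq, abs_of_pos d1, d2, hε]
  have m2 : ((x, yv s t x - δ) : Pt) ∈ Metric.ball z ε ∩ {w : Pt | w.2 < yv s t w.1} := by
    refine ⟨?_, by simpa using d1⟩
    rw [Metric.mem_ball, hz, Prod.dist_eq]
    simp [Real.dist_eq, abs_of_pos d1, d2, hε]
  have tri : ∀ w ∈ Metric.ball z ε, w ∈ frontier K ∨ w ∈ Metric.ball z ε ∩ {w : Pt | yv s t w.1 < w.2} ∨
      w ∈ Metric.ball z ε ∩ {w : Pt | w.2 < yv s t w.1} := by
    intro w hw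
    rcases lt_trichotomy w.2 (yv s t w.1) with h | h | h
    · exact Or.inr (Or.inr ⟨hw, h⟩)
    · exact Or.inl (onfr w hw h)
    · exact Or.inr (Or.inl ⟨hw, h⟩)
  rcases S1 with S1 | S1 <;> rcases S2 with S2 | S2
  · exfalso
    have : Metric.ball z ε ⊆ K := by
      intro w hw
      rcases tri w hw with h | h | h
      · exact hKc.frontier_subset h
      · exact interior_subset (S1 h)
      · exact interior_subset (S2 h)
    exact hzf.2 (mem_interior.2 ⟨_, this, Metric.isOpen_ball, Metric.mem_ball_self hε⟩)
  · have := interior_subset (S1 m1)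
    have := S2 m2
    tauto
  · have := S1 m1
    have := interior_subset (S2 m2)
    tauto
  · exfalso
    have hzc : z ∈ closure (interior K) := by rw [hcl]; exact hKc.frontier_subset hzf
    obtain ⟨w, hw, hwi⟩ := mem_closure_iff.1 hzc _ Metric.isOpen_ball (Metric.mem_ball_self hε)
    rcases tri w hw with h | h | h
    · exact h.2 hwi
    · exact S1 h (interior_subset hwi)
    · exact S2 h (interior_subset hwi)

/-- parity characterization of membership in the region -/
lemma ray_parity (P : ℕ → Pt) (n : ℕ) (K : Set Pt) (hKc : IsCompact K)
    (hcl : closure (interior K) = K)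
    (hfr : frontier K = ⋃ k ∈ Finset.range n, seg (P k) (P (k+1)))
    (hsimp : ∀ k l, k < n → l < n → k ≠ l → ∀ z ∈ seg (P k) (P (k+1)), z ∈ seg (P l) (P (l+1)) →
      z = P k ∨ z = P (k+1))
    (hx : ∀ k, k < n → (P k).1 ≠ (P (k+1)).1)
    (q : Pt) (hq : ∀ k, k ≤ n → (P k).1 ≠ q.1) (hqK : q ∈ interior K) :
    ∑ k ∈ Finset.range n, rr (P k) (P (k+1)) q = 1 := by
  classical
  set E := (Finset.range n).filter (fun k => spans (P k) (P (k+1)) q.1) with hE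
  set Y : ℕ → ℝ := fun k => yv (P k) (P (k+1)) q.1 with hYd
  have onseg : ∀ k ∈ E, ((q.1, Y k) : Pt) ∈ seg (P k) (P (k+1)) := by
    intro k hk
    simp only [hE, Finset.mem_filter, Finset.mem_range] at hk
    rcases hk.2 with h | h
    · exact yv_mem (h.1.trans h.2) h.1.le h.2.le
    · rw [seg_comm, hYd]
      simp only
      rw [yv_comm (hx k hk.1)]
      exact yv_mem (h.1.trans h.2) h.1.le h.2.le
  have notV : ∀ k ∈ E, ∀ l < n, l ≠ k → ((q.1, Y k) : Pt) ∉ seg (P l) (P (l+1)) := by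
    intro k hk l hl hlk hm
    have hkn : k < n := by simp only [hE, Finset.mem_filter, Finset.mem_range] at hk; exact hk.1
    rcases hsimp k l hkn hl hlk.symm _ (onseg k hk) hm with h | h
    · exact hq k hkn.le (by rw [← h])
    · exact hq (k+1) hkn (by rw [← h])
  have onfr : ∀ y, ((q.1, y) : Pt) ∈ frontier K → ∃ k ∈ E, Y k = y := by
    intro y hy
    rw [hfr] at hy
    simp only [mem_iUnion, Finset.mem_range] at hy
    obtain ⟨k, hk, hm⟩ := hy
    have a1 := hq k hk.le
    have a2 := hq (k+1) hk
    rcases lt_or_gt_of_ne (hx k hk) with h | h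
    · obtain ⟨h1, h2, h3⟩ := mem_seg_iff h hm
      refine ⟨k, ?_, h3.symm⟩
      simp only [hE, Finset.mem_filter, Finset.mem_range]
      exact ⟨hk, Or.inl ⟨lt_of_le_of_ne h1 a1, lt_of_le_of_ne h2 a2.symm⟩⟩
    · rw [seg_comm] at hm
      obtain ⟨h1, h2, h3⟩ := mem_seg_iff h hm
      refine ⟨k, ?_, ?_⟩
      · simp only [hE, Finset.mem_filter, Finset.mem_range]
        exact ⟨hk, Or.inr ⟨lt_of_le_of_ne h1 a2, lt_of_le_of_ne h2 a1.symm⟩⟩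
      · exact (yv_comm h.ne' _).trans h3.symm
  have segcl : ∀ a b : Pt, IsClosed (seg a b) := by
    intro a b
    unfold seg
    rw [segment_eq_image]
    exact (isCompact_Icc.image (by fun_prop)).isClosed
  have main := parity_line E Y
    (by
      intro k hk l hl he
      by_contra hne
      have hln : l < n := by simp only [hE, Finset.mem_filter, Finset.mem_range] at hl; exact hl.1
      apply notV k hk l hln (Ne.symm hne)
      rw [he]; exact onseg l hl)
    (fun y => ((q.1, y) : Pt) ∈ K)
    (by
      intro y₁ y₂ h12 hno
      have hpre : IsPreconnected ((fun y : ℝ => ((q.1, y) : Pt)) '' Icc y₁ y₂) :=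
        isPreconnected_Icc.image _ (by fun_prop)
      have := side_of_conn (K := K) hpre (Set.disjoint_left.2 (by
        rintro _ ⟨y, hy, rfl⟩ hf
        obtain ⟨k, hk, rfl⟩ := onfr y hf
        exact hno k hk hy))
      rw [hKc.isClosed.closure_eq] at this
      have m1 := mem_image_of_mem (fun y : ℝ => ((q.1, y) : Pt)) (left_mem_Icc.2 h12)
      have m2 := mem_image_of_mem (fun y : ℝ => ((q.1, y) : Pt)) (right_mem_Icc.2 h12)
      rcases this with h | h
      · have := interior_subset (h m1)
        have := interior_subset (h m2)
        tauto
      · have := h m1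
        have := h m2
        tauto)
    (by
      intro k hk
      have hk' := hk
      simp only [hE, Finset.mem_filter, Finset.mem_range] at hk'
      set C : Set Pt := ⋃ l ∈ (Finset.range n).erase k, seg (P l) (P (l+1)) with hCd
      have hC : IsClosed C := isClosed_biUnion_finset fun l _ => segcl _ _
      have hfr' : frontier K = seg (P k) (P (k+1)) ∪ C := by
        rw [hfr, ← Finset.insert_erase (Finset.mem_range.2 hk'.1), Finset.set_biUnion_insert]
      have hnC : ((q.1, Y k) : Pt) ∉ C := by
        simp only [hCd, mem_iUnion, Finset.mem_erase, Finset.mem_range]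
        rintro ⟨l, ⟨h1, h2⟩, h3⟩
        exact notV k hk l h2 h1 h3
      rcases hk'.2 with h | h
      · exact flip_edge hKc.isClosed hcl _ _ (h.1.trans h.2) C hC hfr' q.1 h.1 h.2 hnC
      · have e : Y k = yv (P (k+1)) (P k) q.1 := yv_comm (hx k hk'.1) _
        rw [e] at hnC ⊢
        rw [seg_comm] at hfr'
        exact flip_edge hKc.isClosed hcl _ _ (h.1.trans h.2) C hC hfr' q.1 h.1 h.2 hnC)
    (by
      obtain ⟨R, hR⟩ := hKc.isBounded.exists_norm_le
      refine ⟨R + 1, fun y hy hm => ?_⟩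
      have h1 := hR _ hm
      have h2 := norm_snd_le ((q.1, y) : Pt)
      have h3 := le_abs_self y
      simp only [Real.norm_eq_abs] at h2
      linarith)
    _ q.2 (by
      intro k hk he
      have h1 : q ∈ frontier K := by
        rw [hfr]
        simp only [mem_iUnion, Finset.mem_range]
        have := onseg k hk
        rw [he] at this
        simp only [hE, Finset.mem_filter, Finset.mem_range] at hk
        exact ⟨k, hk.1, this⟩
      exact h1.2 hqK) rfl
  have hodd := main.1 (interior_subset hqK)
  have : ∑ k ∈ Finset.range n, rr (P k) (P (k+1)) q = ((E.filter (fun k => q.2 < Y k)).card : ZMod 2) := by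
    rw [hE, Finset.filter_filter, Finset.card_filter]
    push_cast
    rfl
  rw [this]
  exact (ZMod.natCast_eq_one_iff_odd).2 hodd

lemma core_alg (P : ℕ → Pt) (n c b d : ℕ) (hc : 0 < c) (hcb : c < b) (hbd : b < d) (hdn : d < n)
    (hPn : P n = P 0) (hinj : ∀ k l, k < n → l < n → k ≠ l → (P k).1 ≠ (P l).1)
    (q q' : Pt) (hq : ∀ k, k < n → (P k).1 ≠ q.1) (hq' : ∀ k, k < n → (P k).1 ≠ q'.1)
    (hqq : q.1 ≠ q'.1)
    (hW : ∑ k ∈ Finset.range n, rr (P k) (P (k+1)) q = 1)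
    (hW' : ∑ k ∈ Finset.range n, rr (P k) (P (k+1)) q' = 1)
    (hac : ∀ k l, 0 ≤ k → k < c → b ≤ l → l < d →
      Disjoint (seg (P k) (P (k+1))) (seg (P l) (P (l+1))))
    (hbe : ∀ k l, c ≤ k → k < b → d ≤ l → l < n →
      Disjoint (seg (P k) (P (k+1))) (seg (P l) (P (l+1))))
    (D1 : ∀ k, c ≤ k → k < d → Disjoint (seg (P k) (P (k+1))) (seg (P 0) q))
    (D2 : ∀ k, k < n → k < c ∨ d ≤ k → Disjoint (seg (P k) (P (k+1))) (seg q (P b)))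
    (D3 : ∀ k, b ≤ k → k < n → Disjoint (seg (P k) (P (k+1))) (seg (P c) q'))
    (D4 : ∀ k, 0 ≤ k → k < b → Disjoint (seg (P k) (P (k+1))) (seg q' (P d)))
    (D5 : Disjoint (seg (P 0) q) (seg (P c) q')) (D6 : Disjoint (seg (P 0) q) (seg q' (P d)))
    (D7 : Disjoint (seg q (P b)) (seg (P c) q')) (D8 : Disjoint (seg q (P b)) (seg q' (P d))) :
    False := by
  have hinj' : ∀ k l, k ≤ n → l ≤ n → k ≠ l → (k = n → l ≠ 0) → (l = n → k ≠ 0) →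
      (P k).1 ≠ (P l).1 := by
    intro k l hk hl hkl h1 h2
    by_cases e1 : k = n
    · rw [e1, hPn]; exact hinj 0 l (by omega) (by omega) (h1 e1).symm
    · by_cases e2 : l = n
      · rw [e2, hPn]; exact hinj k 0 (by omega) (by omega) (h2 e2)
      · exact hinj k l (by omega) (by omega) hkl
  have hqn : ∀ k, k ≤ n → (P k).1 ≠ q.1 := by
    intro k hk
    by_cases e1 : k = n
    · rw [e1, hPn]; exact hq 0 (by omega)
    · exact hq k (by omega)
  have hqn' : ∀ k, k ≤ n → (P k).1 ≠ q'.1 := by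
    intro k hk
    by_cases e1 : k = n
    · rw [e1, hPn]; exact hq' 0 (by omega)
    · exact hq' k (by omega)
  have hE : ∀ k, k < n → (P k).1 ≠ (P (k+1)).1 := fun k hk =>
    hinj' k (k+1) (by omega) (by omega) (by omega) (by omega) (by omega)
  have F1 := path_path P 0 c b d (by omega) (by omega) (fun k _ _ => hE k (by omega))
    (fun k _ _ => hE k (by omega))
    (fun k l _ _ _ _ => hinj k l (by omega) (by omega) (by omega)) hac
  have F2 := path_path P c b d n (by omega) (by omega) (fun k _ _ => hE k (by omega))
    (fun k _ _ => hE k (by omega))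
    (fun k l _ _ _ _ => hinj' k l (by omega) (by omega) (by omega) (by omega) (by omega)) hbe
  have G1 := path_seg P c d (by omega) (P 0) q (hq 0 (by omega)) (fun k _ _ => hE k (by omega))
    (fun k _ _ => hinj k 0 (by omega) (by omega) (by omega)) (fun k _ _ => hq k (by omega))
    D1
  have G2 := path_seg P 0 c (by omega) q (P b) (hq b (by omega)).symm (fun k _ _ => hE k (by omega))
    (fun k _ _ => hq k (by omega)) (fun k _ _ => hinj k b (by omega) (by omega) (by omega))
    (fun k _ h => D2 k (by omega) (Or.inl h))
  have G3 := path_seg P d n (by omega) q (P b) (hq b (by omega)).symm (fun k _ _ => hE k (by omega))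
    (fun k _ _ => hqn k (by omega))
    (fun k _ _ => hinj' k b (by omega) (by omega) (by omega) (by omega) (by omega))
    (fun k h _ => D2 k (by omega) (Or.inr h))
  have G4 := path_seg P b n (by omega) (P c) q' (hq' c (by omega)) (fun k _ _ => hE k (by omega))
    (fun k _ _ => hinj' k c (by omega) (by omega) (by omega) (by omega) (by omega))
    (fun k _ _ => hqn' k (by omega)) D3
  have G5 := path_seg P 0 b (by omega) q' (P d) (hq' d (by omega)).symm (fun k _ _ => hE k (by omega))
    (fun k _ _ => hq' k (by omega))
    (fun k _ _ => hinj k d (by omega) (by omega) (by omega)) D4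
  have H1 := pair_formula (hq 0 (by omega)) (hq' c (by omega)) (hinj 0 c (by omega) (by omega) (by omega))
    (hq' 0 (by omega)) (hq c (by omega)).symm hqq D5
  have H2 := pair_formula (hq 0 (by omega)) (hq' d (by omega)).symm (hq' 0 (by omega))
    (hinj 0 d (by omega) (by omega) (by omega)) hqq (hq d (by omega)).symm D6
  have H3 := pair_formula (hq b (by omega)).symm (hq' c (by omega)) (hq c (by omega)).symm hqq
    (hinj b c (by omega) (by omega) (by omega)) (hq' b (by omega)) D7
  have H4 := pair_formula (hq b (by omega)).symm (hq' d (by omega)).symm hqq (hq d (by omega)).symm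
    (hq' b (by omega)) (hinj b d (by omega) (by omega) (by omega)) D8
  rw [hPn] at F2 G3 G4
  have sp : ∀ z, ∑ k ∈ Finset.range n, rr (P k) (P (k+1)) z =
      (∑ k ∈ Finset.Ico 0 c, rr (P k) (P (k+1)) z) + (∑ k ∈ Finset.Ico c b, rr (P k) (P (k+1)) z)
      + (∑ k ∈ Finset.Ico b d, rr (P k) (P (k+1)) z) + (∑ k ∈ Finset.Ico d n, rr (P k) (P (k+1)) z) := by
    intro z
    rw [Finset.sum_Ico_consecutive _ (by omega) (by omega), Finset.sum_Ico_consecutive _ (by omega) (by omega),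
      Finset.sum_Ico_consecutive _ (by omega) (by omega), Finset.range_eq_Ico]
  rw [sp] at hW hW'
  have s1 : ∀ z, ∑ k ∈ Finset.Ico c d, rr (P k) (P (k+1)) z = (∑ k ∈ Finset.Ico c b, rr (P k) (P (k+1)) z)
      + (∑ k ∈ Finset.Ico b d, rr (P k) (P (k+1)) z) := fun z =>
    (Finset.sum_Ico_consecutive _ (by omega) (by omega)).symm
  have s2 : ∀ z, ∑ k ∈ Finset.Ico b n, rr (P k) (P (k+1)) z = (∑ k ∈ Finset.Ico b d, rr (P k) (P (k+1)) z)
      + (∑ k ∈ Finset.Ico d n, rr (P k) (P (k+1)) z) := fun z =>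
    (Finset.sum_Ico_consecutive _ (by omega) (by omega)).symm
  have s3 : ∀ z, ∑ k ∈ Finset.Ico 0 b, rr (P k) (P (k+1)) z = (∑ k ∈ Finset.Ico 0 c, rr (P k) (P (k+1)) z)
      + (∑ k ∈ Finset.Ico c b, rr (P k) (P (k+1)) z) := fun z =>
    (Finset.sum_Ico_consecutive _ (by omega) (by omega)).symm
  rw [s1, s1] at G1
  rw [s2, s2] at G4
  rw [s3, s3] at G5
  have L1 := LL_swap (hinj 0 c (by omega) (by omega) (by omega))
  have L2 := LL_swap (hinj 0 b (by omega) (by omega) (by omega))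
  have L3 := LL_swap (hinj 0 d (by omega) (by omega) (by omega))
  have L4 := LL_swap (hinj c b (by omega) (by omega) (by omega))
  have L5 := LL_swap (hinj c d (by omega) (by omega) (by omega))
  have L6 := LL_swap (hinj b d (by omega) (by omega) (by omega))
  have L7 := LL_swap (hqq)
  have L8 := LL_swap (hq c (by omega))
  have L9 := LL_swap (hq d (by omega))
  have M1 := LL_swap (hq' 0 (by omega))
  have M2 := LL_swap (hq' b (by omega))
  have e2 : (2:ZMod 2) = 0 := by decide
  have e1 : (1:ZMod 2) ≠ 0 := by decide
  grind

lemma seg_sub {a b q : Pt} (hq : q ∈ seg a b) : seg a q ⊆ seg a b ∧ seg q b ⊆ seg a b := by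
  unfold seg at *
  exact ⟨(convex_segment a b).segment_subset (left_mem_segment ℝ a b) hq,
    (convex_segment a b).segment_subset hq (right_mem_segment ℝ a b)⟩

lemma core_generic (P : ℕ → Pt) (n c b d : ℕ) (hc : 0 < c) (hcb : c < b) (hbd : b < d) (hdn : d < n)
    (hPn : P n = P 0) (hinj : ∀ k l, k < n → l < n → k ≠ l → (P k).1 ≠ (P l).1)
    (q q' : Pt) (hq : ∀ k, k < n → (P k).1 ≠ q.1) (hq' : ∀ k, k < n → (P k).1 ≠ q'.1)
    (hqq : q.1 ≠ q'.1)
    (K : Set Pt) (hKc : IsCompact K)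
    (hcl : closure (interior K) = K)
    (hfr : frontier K = ⋃ k ∈ Finset.range n, seg (P k) (P (k+1)))
    (hsimp : ∀ k l, k < n → l < n → k ≠ l → ∀ z ∈ seg (P k) (P (k+1)), z ∈ seg (P l) (P (l+1)) →
      (z = P k ∨ z = P (k+1)) ∧ (z = P l ∨ z = P (l+1)))
    (hab : ∀ k, k < n → ∀ z ∈ seg (P 0) (P b), z ∈ seg (P k) (P (k+1)) →
      (z = P 0 ∨ z = P b) ∧ (z = P k ∨ z = P (k+1)))
    (hcd : ∀ k, k < n → ∀ z ∈ seg (P c) (P d), z ∈ seg (P k) (P (k+1)) →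
      (z = P c ∨ z = P d) ∧ (z = P k ∨ z = P (k+1)))
    (hK1 : seg (P 0) (P b) ⊆ K) (hK2 : seg (P c) (P d) ⊆ K)
    (hdis : Disjoint (seg (P 0) (P b)) (seg (P c) (P d)))
    (hqm : q ∈ seg (P 0) (P b)) (hq1 : P b ∉ seg (P 0) q) (hq2 : P 0 ∉ seg q (P b))
    (hqm' : q' ∈ seg (P c) (P d)) (hq1' : P d ∉ seg (P c) q') (hq2' : P c ∉ seg q' (P d)) :
    False := by
  have hinj' : ∀ k l, k ≤ n → l ≤ n → k ≠ l → (k = n → l ≠ 0) → (l = n → k ≠ 0) →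
      P k ≠ P l := by
    intro k l hk hl hkl h1 h2 h
    by_cases e1 : k = n
    · rw [e1, hPn] at h; exact hinj 0 l (by omega) (by omega) (h1 e1).symm (by rw [h])
    · by_cases e2 : l = n
      · rw [e2, hPn] at h; exact hinj k 0 (by omega) (by omega) (h2 e2) (by rw [h])
      · exact hinj k l (by omega) (by omega) hkl (by rw [h])
  have hqn : ∀ k, k ≤ n → (P k).1 ≠ q.1 := by
    intro k hk
    by_cases e1 : k = n
    · rw [e1, hPn]; exact hq 0 (by omega)
    · exact hq k (by omega)
  have hqn' : ∀ k, k ≤ n → (P k).1 ≠ q'.1 := by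
    intro k hk
    by_cases e1 : k = n
    · rw [e1, hPn]; exact hq' 0 (by omega)
    · exact hq' k (by omega)
  have hE : ∀ k, k < n → (P k).1 ≠ (P (k+1)).1 := by
    intro k hk
    by_cases e1 : k + 1 = n
    · rw [e1, hPn]; exact hinj k 0 (by omega) (by omega) (by omega)
    · exact hinj k (k+1) (by omega) (by omega) (by omega)
  have iq : q ∈ interior K := by
    by_contra h
    have : q ∈ frontier K := ⟨subset_closure (hK1 hqm), h⟩
    rw [hfr] at this
    simp only [mem_iUnion, Finset.mem_range] at this
    obtain ⟨k, hk, hm⟩ := this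
    rcases (hab k hk q hqm hm).1 with h | h
    · exact hq 0 (by omega) (by rw [h])
    · exact hq b (by omega) (by rw [h])
  have iq' : q' ∈ interior K := by
    by_contra h
    have : q' ∈ frontier K := ⟨subset_closure (hK2 hqm'), h⟩
    rw [hfr] at this
    simp only [mem_iUnion, Finset.mem_range] at this
    obtain ⟨k, hk, hm⟩ := this
    rcases (hcd k hk q' hqm' hm).1 with h | h
    · exact hq' c (by omega) (by rw [h])
    · exact hq' d (by omega) (by rw [h])
  have hs' : ∀ k l, k < n → l < n → k ≠ l → ∀ z ∈ seg (P k) (P (k+1)), z ∈ seg (P l) (P (l+1)) →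
      (z = P k ∨ z = P (k+1)) := fun k l h1 h2 h3 z h4 h5 => (hsimp k l h1 h2 h3 z h4 h5).1
  have W := ray_parity P n K hKc hcl hfr hs' hE q hqn iq
  have W' := ray_parity P n K hKc hcl hfr hs' hE q' hqn' iq'
  obtain ⟨u1, u2⟩ := seg_sub hqm
  obtain ⟨v1, v2⟩ := seg_sub hqm'
  refine core_alg P n c b d hc hcb hbd hdn hPn hinj q q' hq hq' hqq W W' ?_ ?_ ?_ ?_ ?_ ?_
    (hdis.mono u1 v1) (hdis.mono u1 v2) (hdis.mono u2 v1) (hdis.mono u2 v2)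
  · intro k l _ h1 h2 h3
    refine Set.disjoint_left.2 fun z z1 z2 => ?_
    obtain ⟨w1, w2⟩ := hsimp k l (by omega) (by omega) (by omega) z z1 z2
    rcases w1 with rfl | rfl <;> rcases w2 with w | w <;>
      exact hinj' _ _ (by omega) (by omega) (by omega) (by omega) (by omega) w
  · intro k l _ h1 h2 h3
    refine Set.disjoint_left.2 fun z z1 z2 => ?_
    obtain ⟨w1, w2⟩ := hsimp k l (by omega) (by omega) (by omega) z z1 z2
    rcases w1 with rfl | rfl <;> rcases w2 with w | w <;>
      exact hinj' _ _ (by omega) (by omega) (by omega) (by omega) (by omega) w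
  · intro k h1 h2
    refine Set.disjoint_left.2 fun z z1 z2 => ?_
    obtain ⟨w1, w2⟩ := hab k (by omega) z (u1 z2) z1
    rcases w1 with rfl | rfl
    · rcases w2 with w | w <;>
        exact hinj' _ _ (by omega) (by omega) (by omega) (by omega) (by omega) w
    · exact hq1 z2
  · intro k h1 h2
    refine Set.disjoint_left.2 fun z z1 z2 => ?_
    obtain ⟨w1, w2⟩ := hab k (by omega) z (u2 z2) z1
    rcases w1 with rfl | rfl
    · exact hq2 z2
    · rcases w2 with w | w <;>
        exact hinj' _ _ (by omega) (by omega) (by omega) (by omega) (by omega) w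
  · intro k h1 h2
    refine Set.disjoint_left.2 fun z z1 z2 => ?_
    obtain ⟨w1, w2⟩ := hcd k (by omega) z (v1 z2) z1
    rcases w1 with rfl | rfl
    · rcases w2 with w | w <;>
        exact hinj' _ _ (by omega) (by omega) (by omega) (by omega) (by omega) w
    · exact hq1' z2
  · intro k h1 h2
    refine Set.disjoint_left.2 fun z z1 z2 => ?_
    obtain ⟨w1, w2⟩ := hcd k (by omega) z (v2 z2) z1
    rcases w1 with rfl | rfl
    · exact hq2' z2
    · rcases w2 with w | w <;>
        exact hinj' _ _ (by omega) (by omega) (by omega) (by omega) (by omega) w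

lemma exists_shear (F : Finset Pt) :
    ∃ ε : ℝ, ∀ a ∈ F, ∀ b ∈ F, a ≠ b → a.1 + ε * a.2 ≠ b.1 + ε * b.2 := by
  classical
  obtain ⟨ε, hε⟩ := Infinite.exists_notMem_finset
    ((F ×ˢ F).image (fun z : Pt × Pt => (z.2.1 - z.1.1) / (z.1.2 - z.2.2)))
  refine ⟨ε, fun a ha b hb hab he => ?_⟩
  by_cases h2 : a.2 = b.2
  · apply hab
    rw [h2] at he
    exact Prod.ext (by linarith) h2
  · apply hε
    rw [Finset.mem_image]
    refine ⟨(a, b), Finset.mk_mem_product ha hb, ?_⟩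
    have : a.2 - b.2 ≠ 0 := sub_ne_zero.2 h2
    simp only
    rw [div_eq_iff this]
    linarith

/-- shear as a linear equivalence -/
noncomputable def shearL (ε : ℝ) : Pt ≃ₗ[ℝ] Pt where
  toFun z := (z.1 + ε * z.2, z.2)
  invFun z := (z.1 - ε * z.2, z.2)
  map_add' a b := by ext <;> simp; ring
  map_smul' a b := by ext <;> simp; ring
  left_inv a := by ext <;> simp
  right_inv a := by ext <;> simp

/-- shear as a homeomorphism -/
noncomputable def shearH (ε : ℝ) : Pt ≃ₜ Pt :=
  (shearL ε).toContinuousLinearEquiv.toHomeomorph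

lemma shearH_apply (ε : ℝ) (z : Pt) : shearH ε z = (z.1 + ε * z.2, z.2) := rfl

lemma shear_seg (ε : ℝ) (a b : Pt) : seg (shearH ε a) (shearH ε b) = shearH ε '' seg a b :=
  (image_segment ℝ (shearL ε).toLinearMap.toAffineMap a b).symm

lemma mid_facts {a b : Pt} (hab : a ≠ b) : ∃ q ∈ seg a b, q ≠ a ∧ q ≠ b ∧ b ∉ seg a q ∧ a ∉ seg q b := by
  have hba : b - a ≠ 0 := sub_ne_zero.2 hab.symm
  refine ⟨a + (1/2:ℝ) • (b - a), ?_, ?_, ?_, ?_, ?_⟩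
  · unfold seg; rw [segment_eq_image']; exact ⟨1/2, by norm_num, rfl⟩
  · intro h
    have : (1/2:ℝ) • (b - a) = 0 := by simpa using h
    simp [hba] at this
  · intro h
    have : (1/2:ℝ) • (b - a) = 0 := by
      have h3 : a + (1/2:ℝ) • (b - a) - b = 0 := by rw [h]; simp
      have h4 : a + (1/2:ℝ) • (b - a) - b = -((1/2:ℝ) • (b - a)) := by module
      rw [h4] at h3; simpa using h3
    simp [hba] at this
  · intro h
    unfold seg at h; rw [segment_eq_image'] at h
    obtain ⟨θ, ⟨h0, h1⟩, h⟩ := h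
    have : (1 - θ/2) • (b - a) = 0 := by
      have h3 : b - (a + θ • (a + (1/2:ℝ) • (b - a) - a)) = 0 := sub_eq_zero.2 h.symm
      rw [← h3]; module
    rcases smul_eq_zero.1 this with h | h
    · linarith
    · exact hba h
  · intro h
    unfold seg at h; rw [segment_eq_image'] at h
    obtain ⟨θ, ⟨h0, h1⟩, h⟩ := h
    have : (1/2 + θ/2) • (b - a) = 0 := by
      have h3 : (a + (1/2:ℝ) • (b - a) + θ • (b - (a + (1/2:ℝ) • (b - a)))) - a = 0 := sub_eq_zero.2 h
      rw [← h3]; module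
    rcases smul_eq_zero.1 this with h | h
    · linarith
    · exact hba h

lemma core (P : ℕ → Pt) (n c b d : ℕ) (hc : 0 < c) (hcb : c < b) (hbd : b < d) (hdn : d < n)
    (hPn : P n = P 0) (hinj : ∀ k l, k < n → l < n → k ≠ l → P k ≠ P l)
    (K : Set Pt) (hKc : IsCompact K)
    (hcl : closure (interior K) = K)
    (hfr : frontier K = ⋃ k ∈ Finset.range n, seg (P k) (P (k+1)))
    (hsimp : ∀ k l, k < n → l < n → k ≠ l → ∀ z ∈ seg (P k) (P (k+1)), z ∈ seg (P l) (P (l+1)) →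
      (z = P k ∨ z = P (k+1)) ∧ (z = P l ∨ z = P (l+1)))
    (hab : ∀ k, k < n → ∀ z ∈ seg (P 0) (P b), z ∈ seg (P k) (P (k+1)) →
      (z = P 0 ∨ z = P b) ∧ (z = P k ∨ z = P (k+1)))
    (hcd : ∀ k, k < n → ∀ z ∈ seg (P c) (P d), z ∈ seg (P k) (P (k+1)) →
      (z = P c ∨ z = P d) ∧ (z = P k ∨ z = P (k+1)))
    (hK1 : seg (P 0) (P b) ⊆ K) (hK2 : seg (P c) (P d) ⊆ K)
    (hdis : Disjoint (seg (P 0) (P b)) (seg (P c) (P d))) :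
    False := by
  classical
  obtain ⟨q, hqm, q0, qb, hq1, hq2⟩ := mid_facts (hinj 0 b (by omega) (by omega) (by omega))
  obtain ⟨q', hqm', q0', qb', hq1', hq2'⟩ := mid_facts (hinj c d (by omega) (by omega) (by omega))
  have hqP : ∀ k, k < n → P k ≠ q := by
    intro k hk he
    rcases (hab k hk q hqm (by rw [← he]; exact left_mem_segment ℝ _ _)).1 with h | h
    · exact q0 h
    · exact qb h
  have hqP' : ∀ k, k < n → P k ≠ q' := by
    intro k hk he
    rcases (hcd k hk q' hqm' (by rw [← he]; exact left_mem_segment ℝ _ _)).1 with h | h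
    · exact q0' h
    · exact qb' h
  have hqq : q ≠ q' := fun h => Set.disjoint_left.1 hdis hqm (h ▸ hqm')
  obtain ⟨ε, hε⟩ := exists_shear ({q, q'} ∪ (Finset.range n).image P)
  have hmP : ∀ k, k < n → P k ∈ ({q, q'} ∪ (Finset.range n).image P : Finset Pt) := fun k hk =>
    Finset.mem_union_right _ (Finset.mem_image_of_mem _ (Finset.mem_range.2 hk))
  set S := shearH ε with hS
  have tr : ∀ (a b a' b' : Pt), (∀ z ∈ seg a b, z ∈ seg a' b' → (z = a ∨ z = b) ∧ (z = a' ∨ z = b')) →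
      ∀ z ∈ seg (S a) (S b), z ∈ seg (S a') (S b') → (z = S a ∨ z = S b) ∧ (z = S a' ∨ z = S b') := by
    intro a b a' b' h z z1 z2
    rw [hS, shear_seg] at z1 z2
    obtain ⟨w, hw, rfl⟩ := z1
    rw [S.injective.mem_set_image] at z2
    simpa [hS] using h w hw z2
  have mt : ∀ {z a b : Pt}, S z ∈ seg (S a) (S b) ↔ z ∈ seg a b := by
    intro z a b
    rw [hS, shear_seg, (shearH ε).injective.mem_set_image]
  refine core_generic (fun k => S (P k)) n c b d hc hcb hbd hdn (by simp [hPn]) ?_ (S q) (S q') ?_ ?_ ?_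
    (S '' K) (hKc.image S.continuous) ?_ ?_ ?_ ?_ ?_ ?_ ?_ ?_
    (mt.2 hqm) (mt.not.2 hq1) (mt.not.2 hq2) (mt.2 hqm') (mt.not.2 hq1') (mt.not.2 hq2')
  · exact fun k l hk hl hkl => hε _ (hmP k hk) _ (hmP l hl) (hinj k l hk hl hkl)
  · exact fun k hk => hε _ (hmP k hk) _ (by simp) (hqP k hk)
  · exact fun k hk => hε _ (hmP k hk) _ (by simp) (hqP' k hk)
  · exact hε _ (by simp) _ (by simp) hqq
  · rw [← S.image_interior, ← S.image_closure, hcl]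
  · rw [← S.image_frontier, hfr, Set.image_iUnion₂]
    simp only [hS, shear_seg]
  · exact fun k l hk hl hkl => tr _ _ _ _ (hsimp k l hk hl hkl)
  · exact fun k hk => tr _ _ _ _ (hab k hk)
  · exact fun k hk => tr _ _ _ _ (hcd k hk)
  · simp only [hS, shear_seg]; exact Set.image_mono hK1
  · simp only [hS, shear_seg]; exact Set.image_mono hK2
  · simp only [hS, shear_seg]; exact (Set.disjoint_image_iff (shearH ε).injective).2 hdis

/-- position of a vertex relative to `i` -/
def posV {n : ℕ} [NeZero n] (i x : Fin n) : ℕ := (x - i).val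

lemma ofNat_posV {n : ℕ} [NeZero n] (i x : Fin n) : i + Fin.ofNat n (posV i x) = x := by
  have : Fin.ofNat n (posV i x) = x - i := by
    ext; simp [posV, Fin.ofNat, Nat.mod_eq_of_lt (x - i).isLt]
  rw [this]; abel

lemma ofNat_succ' {n : ℕ} [NeZero n] (i : Fin n) (k : ℕ) :
    i + Fin.ofNat n (k+1) = i + Fin.ofNat n k + 1 := by
  rw [add_assoc]
  congr 1
  ext
  simp [Fin.val_add, Fin.ofNat]

lemma posV_ofNat {n : ℕ} [NeZero n] (i : Fin n) {k : ℕ} (hk : k < n) :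
    posV i (i + Fin.ofNat n k) = k := by
  simp [posV, Fin.ofNat, Nat.mod_eq_of_lt hk]

/-- a chord of the polygon inside the region -/
def ChordP {n : ℕ} [NeZero n] (p : Fin n → Pt) (K : Set Pt) (a b : Fin n) : Prop :=
  seg (p a) (p b) ⊆ K ∧ ∀ i : Fin n, seg (p a) (p b) ∩ edgeSeg p i ⊆
      ({p a, p b} ∩ {p i, p (i + 1)} : Set Pt)

lemma ChordP.symm {n : ℕ} [NeZero n] {p : Fin n → Pt} {K : Set Pt} {a b : Fin n}
    (h : ChordP p K a b) : ChordP p K b a := by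
  unfold ChordP at *
  rw [seg_comm, Set.pair_comm]
  exact h

lemma core_poly {n : ℕ} [NeZero n] (p : Fin n → Pt) (hP : IsSimplePolygon p)
    (K : Set Pt) (hK : IsRegionOf p K) (i b c d : Fin n)
    (hib : ChordP p K i b) (hcd : ChordP p K c d) (hdis : Disjoint (seg (p i) (p b)) (seg (p c) (p d)))
    (h0 : 0 < posV i c) (h1 : posV i c < posV i b) (h2 : posV i b < posV i d) : False := by
  obtain ⟨h3, hpi, hps⟩ := hP
  obtain ⟨hk1, hk2, hk3⟩ := hK
  set P : ℕ → Pt := fun k => p (i + Fin.ofNat n k) with hPd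
  have e0 : P 0 = p i := by simp [hPd]
  have eP : ∀ x, P (posV i x) = p x := fun x => by simp only [hPd, ofNat_posV]
  have eS : ∀ k, P (k+1) = p (i + Fin.ofNat n k + 1) := fun k => by simp only [hPd, ofNat_succ']
  have eE : ∀ k, seg (P k) (P (k+1)) = edgeSeg p (i + Fin.ofNat n k) := fun k => by
    rw [eS]; rfl
  have einj : ∀ k l, k < n → l < n → k ≠ l → i + Fin.ofNat n k ≠ i + Fin.ofNat n l := by
    intro k l hk hl hkl he
    apply hkl
    rw [← posV_ofNat i hk, he, posV_ofNat i hl]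
  refine core P n (posV i c) (posV i b) (posV i d) h0 h1 h2 (Fin.isLt _) ?_ ?_ K hk1 hk2 ?_ ?_ ?_ ?_ ?_ ?_ ?_
  · simp [hPd, Fin.ofNat]
  · intro k l hk hl hkl he
    exact einj k l hk hl hkl (hpi he)
  · rw [hk3]
    ext z
    simp only [mem_iUnion, Finset.mem_range]
    constructor
    · rintro ⟨x, hx⟩
      refine ⟨posV i x, Fin.isLt _, ?_⟩
      rw [eE, ofNat_posV]; exact hx
    · rintro ⟨k, _, hx⟩
      rw [eE] at hx
      exact ⟨_, hx⟩
  · intro k l hk hl hkl z z1 z2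
    rw [eE] at z1 z2
    rw [eS, eS]
    have := hps _ _ (einj k l hk hl hkl) ⟨z1, z2⟩
    exact this
  · intro k hk z z1 z2
    rw [eE] at z2
    rw [e0, eP] at z1
    rw [eS, e0, eP]
    have := hib.2 _ ⟨z1, z2⟩
    exact this
  · intro k hk z z1 z2
    rw [eE] at z2
    rw [eP, eP] at z1
    rw [eS, eP, eP]
    have := hcd.2 _ ⟨z1, z2⟩
    exact this
  · rw [e0, eP]; exact hib.1
  · rw [eP, eP]; exact hcd.1
  · rw [e0, eP, eP, eP]; exact hdis

lemma step_exists (g : ℕ → ℕ) (s : ℕ) (N : ℕ) (h0 : s < g 0) (hN : g N ≤ s) :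
    ∃ k < N, s < g k ∧ g (k+1) ≤ s := by
  induction N with
  | zero => omega
  | succ N ih =>
    by_cases h : g N ≤ s
    · obtain ⟨k, hk, h⟩ := ih h
      exact ⟨k, by omega, h⟩
    · exact ⟨N, by omega, by omega, hN⟩

/-- the main combinatorial contradiction -/
lemma main_contra {n : ℕ} [NeZero n] (p : Fin n → Pt) (hP : IsSimplePolygon p)
    (K : Set Pt) (hK : IsRegionOf p K) (i u w x y : Fin n)
    (hu : ChordP p K i u) (hw : ChordP p K i w) (hxy : ChordP p K x y)
    (hnxy : ¬ adjV x y) (huw : posV i u = posV i w + 1)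
    (hx : posV i w < posV i x) (hy : posV i y ≤ posV i w) (hy0 : 0 < posV i y)
    (ncu : x ≠ u → NC (p x) (p y) (p i) (p u)) (ncw : y ≠ w → NC (p x) (p y) (p i) (p w)) : False := by
  have pinj : ∀ a b : Fin n, posV i a = posV i b → a = b := by
    intro a b h
    rw [← ofNat_posV i a, h, ofNat_posV]
  have hi0 : posV i i = 0 := by simp [posV]
  have hpi := hP.2.1
  by_cases hxu : x = u
  · have hyw : y ≠ w := by
      rintro rfl
      apply hnxy
      right
      rw [hxu, ← ofNat_posV i u, huw, ofNat_succ', ofNat_posV]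
    have hlt : posV i y < posV i w := lt_of_le_of_ne hy fun h => hyw (pinj _ _ h)
    refine core_poly p hP K hK i w y x hw hxy.symm ?_ hy0 hlt hx
    rw [seg_comm (p y)]
    refine Set.disjoint_left.2 fun z z1 z2 => ?_
    obtain ⟨w1, w2⟩ := ncw hyw ⟨z2, z1⟩
    rcases w1 with rfl | rfl <;> rcases w2 with w | w <;> have := hpi w <;> subst this <;> omega
  · have hlt : posV i u < posV i x := lt_of_le_of_ne (by omega) fun h => hxu (pinj _ _ h).symm
    refine core_poly p hP K hK i u y x hu hxy.symm ?_ hy0 (by omega) hlt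
    rw [seg_comm (p y)]
    refine Set.disjoint_left.2 fun z z1 z2 => ?_
    obtain ⟨w1, w2⟩ := ncu hxu ⟨z2, z1⟩
    rcases w1 with rfl | rfl <;> rcases w2 with w | w <;> have := hpi w <;> subst this <;> omega

lemma posV_succ {n : ℕ} [NeZero n] (i u : Fin n) (h : u + 1 ≠ i) : posV i (u+1) = posV i u + 1 := by
  have e : u + 1 = i + Fin.ofNat n (posV i u + 1) := by rw [ofNat_succ', ofNat_posV]
  have hlt : posV i u < n := Fin.isLt _
  by_cases hk : posV i u + 1 < n
  · rw [e, posV_ofNat i hk]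
  · exfalso
    apply h
    rw [e, show posV i u + 1 = n by omega]
    simp [Fin.ofNat]

lemma NC_swap {a b c d : Pt} (h : NC a b c d) : NC b a c d := by
  unfold NC at *
  rwa [seg_comm b a, Set.pair_comm b a]

lemma NC_swap' {a b c d : Pt} (h : NC a b c d) : NC a b d c := by
  unfold NC at *
  rwa [seg_comm d c, Set.pair_comm d c]

/-- An isolated vertex of a simple polygon `P` cannot be the image of any node of a
straight-line planarly polygon-embedded cycle graph in `P`. -/
theorem stmt_8 (n m : ℕ) [NeZero n] [NeZero m] (hm : 3 ≤ m)
    (p : Fin n → Pt) (hP : IsSimplePolygon p)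
    (K : Set Pt) (hK : IsRegionOf p K)
    (i : Fin n) (hiso : IsIsolated p i)
    (f : Fin m → Fin n) (hf : IsCycleEmbedding p K f) :
    ∀ j : Fin m, f j ≠ i := by
  intro j hj
  obtain ⟨finj, fadj, fK, fNC, fE⟩ := hf
  have hn := hP.1
  have hpi := hP.2.1
  have ch : ∀ k, ChordP p K (f k) (f (k+1)) := fun k => ⟨fK k, fE k⟩
  have a0 : j + Fin.ofNat m 0 = j := by simp
  have aS : ∀ k, j + Fin.ofNat m (k+1) = j + Fin.ofNat m k + 1 := ofNat_succ' j
  have aj : ∀ k, 0 < k → k < m → f (j + Fin.ofNat m k) ≠ i := by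
    intro k hk hkm he
    rw [← hj] at he
    have h1 := posV_ofNat j hkm
    rw [finj he] at h1
    simp [posV] at h1
    omega
  have a1 : j + Fin.ofNat m 1 = j + 1 := by rw [aS 0, a0]
  set wj : Fin m := j + Fin.ofNat m (m-1) with hwj
  have aw : wj + 1 = j := by
    rw [hwj, ← aS, show m - 1 + 1 = m by omega]
    simp [Fin.ofNat]
  set u := f (j+1) with hu
  set w := f wj with hw
  have hui : u ≠ i := by rw [hu, ← a1]; exact aj 1 (by omega) (by omega)
  have hwi : w ≠ i := aj (m-1) (by omega) (by omega)
  have huw : u ≠ w := by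
    intro h
    have h2 := finj h
    rw [← a1, hwj] at h2
    have h3 := posV_ofNat j (show 1 < m by omega)
    rw [h2, posV_ofNat j (by omega)] at h3
    omega
  have chu : ChordP p K i u := by have := ch j; rwa [hj] at this
  have chw : ChordP p K i w := by
    have := ch wj
    rw [aw, hj] at this
    exact this.symm
  have nau : ¬ adjV i u := by have := fadj j; rwa [hj] at this
  have naw : ¬ adjV w i := by have := fadj wj; rwa [aw, hj] at this
  have hadj : adjV u w := by
    have mu : u ∈ visSet p i := Or.inl chu.2
    have mw : w ∈ visSet p i := Or.inl chw.2
    have n1 : (1 : Fin n) ≠ 0 := by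
      intro h
      have h2 := congrArg Fin.val h
      rw [Fin.val_one', Nat.mod_eq_of_lt (by omega)] at h2
      simp at h2
    have n2 : (1 : Fin n) + 1 ≠ 0 := by
      intro h
      have h2 := congrArg Fin.val h
      rw [Fin.val_add, Fin.val_one', Nat.mod_eq_of_lt (show 1 < n by omega),
        Nat.mod_eq_of_lt (show 1 + 1 < n by omega)] at h2
      simp at h2
    have b1 : i - 1 ≠ i := fun h => n1 (by simpa using h)
    have b2 : i ≠ i + 1 := fun h => n1 (by simpa using h)
    have b3 : i - 1 ≠ i + 1 := by
      intro h
      apply n2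
      have h4 : i + (1 + 1) = i := by rw [← add_assoc, ← h]; simp
      simpa using h4
    have c1 : u ≠ i + 1 := fun h => nau (Or.inl h)
    have c2 : u ≠ i - 1 := fun h => nau (Or.inr (by rw [h]; simp))
    have c3 : w ≠ i + 1 := fun h => naw (Or.inr h)
    have c4 : w ≠ i - 1 := fun h => naw (Or.inl (by rw [h]; simp))
    have hsub : ((({i - 1, i, i + 1, u, w} : Finset (Fin n)) : Set (Fin n))) ⊆ visSet p i := by
      intro z hz
      simp only [Finset.coe_insert, Finset.coe_singleton, mem_insert_iff, mem_singleton_iff] at hz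
      rcases hz with rfl | rfl | rfl | rfl | rfl
      · exact Or.inr (Or.inl rfl)
      · exact Or.inr (Or.inr (Or.inl rfl))
      · exact Or.inr (Or.inr (Or.inr rfl))
      · exact mu
      · exact mw
    have hcard := Set.ncard_le_ncard hsub (Set.toFinite _)
    rw [Set.ncard_coe_finset, Finset.card_insert_of_notMem (by simp [b1, b3, c2.symm, c4.symm]),
      Finset.card_insert_of_notMem (by simp only [Finset.mem_insert, Finset.mem_singleton]; tauto),
      Finset.card_insert_of_notMem (by simp [c1.symm, c3.symm]),
      Finset.card_insert_of_notMem (by simp [huw]), Finset.card_singleton] at hcard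
    rcases hiso with h | ⟨_, h⟩
    · omega
    · refine h u mu w mw ?_ ?_ huw
      · simp only [mem_insert_iff, mem_singleton_iff]; tauto
      · simp only [mem_insert_iff, mem_singleton_iff]; tauto
  have nset : ∀ k, f k ≠ i → f (k+1) ≠ i → ∀ z : Fin n,
      ({p (f k), p (f (k+1))} : Set Pt) ≠ ({p i, p z} : Set Pt) := by
    intro k h1 h2 z he
    have : p i ∈ ({p (f k), p (f (k+1))} : Set Pt) := by rw [he]; simp
    rcases this with h | h
    · exact h1 (hpi h).symm
    · exact h2 (hpi h).symm
  have ncu : ∀ k, f k ≠ i → f (k+1) ≠ i → NC (p (f k)) (p (f (k+1))) (p i) (p u) := by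
    intro k h1 h2
    have := fNC k j (by rw [hj]; exact nset k h1 h2 _)
    rwa [hj] at this
  have ncw : ∀ k, f k ≠ i → f (k+1) ≠ i → NC (p (f k)) (p (f (k+1))) (p i) (p w) := by
    intro k h1 h2
    have := fNC k wj (by rw [aw, hj, Set.pair_comm (p (f wj))]; exact nset k h1 h2 _)
    rw [aw, hj] at this
    exact NC_swap' this
  have ppos : ∀ x, x ≠ i → 0 < posV i x := by
    intro x hx
    rw [Nat.pos_iff_ne_zero]
    intro h0
    apply hx
    rw [← ofNat_posV i x, h0]
    simp
  have gw : f (j + Fin.ofNat m (m - 2 + 1)) = w := by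
    rw [hw, hwj, show m - 2 + 1 = m - 1 by omega]
  have gu : f (j + Fin.ofNat m (0 + 1)) = u := by rw [zero_add, a1]
  rcases hadj with h | h
  · -- `w = u + 1`
    have hp : posV i w = posV i u + 1 := by rw [h]; exact posV_succ i u (by rw [← h]; exact hwi)
    obtain ⟨k, hk, k1, k2⟩ := step_exists (fun k => posV i (f (j + Fin.ofNat m (m - 2 - k + 1))))
      (posV i u) (m - 2) (by simp only [Nat.sub_zero, gw]; omega)
      (by simp only [Nat.sub_self, gu]; omega)
    obtain ⟨l, hl⟩ : ∃ l, m - 2 - k = l + 1 := ⟨m - 2 - k - 1, by omega⟩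
    have hl' : m - 2 - (k + 1) = l := by omega
    rw [hl, aS (l+1)] at k1
    rw [hl'] at k2
    have i1 := aj (l+1) (by omega) (by omega)
    have i2 := aj (l+1+1) (by omega) (by omega)
    rw [aS (l+1)] at i2
    exact main_contra p hP K hK i w u _ _ chw chu (ch (j + Fin.ofNat m (l+1))).symm
      (fun hh => fadj _ hh.symm) hp k1 k2 (ppos _ i1)
      (fun _ => NC_swap (ncw _ i1 i2)) (fun _ => NC_swap (ncu _ i1 i2))
  · have hp : posV i u = posV i w + 1 := by rw [h]; exact posV_succ i w (by rw [← h]; exact hui)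
    obtain ⟨k, hk, k1, k2⟩ := step_exists (fun k => posV i (f (j + Fin.ofNat m (k + 1))))
      (posV i w) (m - 2) (by simp only [gu]; omega) (by simp only [gw]; omega)
    rw [aS (k+1)] at k2
    have i1 := aj (k+1) (by omega) (by omega)
    have i2 := aj (k+1+1) (by omega) (by omega)
    rw [aS (k+1)] at i2
    exact main_contra p hP K hK i u w _ _ chu chw (ch (j + Fin.ofNat m (k+1)))
      (fadj _) hp k1 k2 (ppos _ i2)
      (fun _ => ncu _ i1 i2) (fun _ => ncw _ i1 i2)
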